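/- The thickness of the complete tripartite graph K_{1,14,14} equals 4. -/

import Mathlib

open SimpleGraph

/-- A simple graph is planar if it admits a drawing in the plane: an injective
placement of vertices and, for each edge, an injective continuous arc joining
the images of its endpoints, such that arcs avoid vertex images in their
interiors and distinct arcs meet only at vertex images. -/
def IsPlanar {V : Type*} (G : SimpleGraph V) : Prop :=
  ∃ (f : V → ℝ × ℝ) (γ : G.edgeSet → (Set.Icc (0:ℝ) 1 → ℝ × ℝ)),
    Function.Injective f ∧
    (∀ e : G.edgeSet, Continuous (γ e)) ∧
    (∀ e : G.edgeSet, ∃ u v : V, (e : Sym2 V) = s(u, v) ∧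
      γ e ⟨0, by norm_num⟩ = f u ∧ γ e ⟨1, by norm_num⟩ = f v) ∧
    (∀ e : G.edgeSet, Function.Injective (γ e)) ∧
    (∀ e : G.edgeSet, ∀ t : Set.Icc (0:ℝ) 1, (t : ℝ) ≠ 0 → (t : ℝ) ≠ 1 →
      ∀ v : V, γ e t ≠ f v) ∧
    (∀ e e' : G.edgeSet, e ≠ e' → ∀ s t : Set.Icc (0:ℝ) 1,
      γ e s = γ e' t → γ e s ∈ Set.range f)

/-- The thickness of a graph: the least `n` such that `G` is the union of `n`
planar subgraphs. -/
noncomputable def thickness {V : Type*} (G : SimpleGraph V) : ℕ :=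
  sInf {n : ℕ | ∃ H : Fin n → SimpleGraph V,
    (∀ i, H i ≤ G) ∧ (∀ i, IsPlanar (H i)) ∧ (⨆ i, H i) = G}

/-! ### Straight line drawings -/

def orientZ (p q r : ℤ × ℤ) : ℤ :=
  (q.1 - p.1) * (r.2 - p.2) - (q.2 - p.2) * (r.1 - p.1)

lemma orient_real (p q r : ℤ × ℤ) : ((orientZ p q r : ℤ) : ℝ) =
    ((q.1 : ℝ) - p.1) * ((r.2 : ℝ) - p.2) - ((q.2 : ℝ) - p.2) * ((r.1 : ℝ) - p.1) := by
  simp [orientZ]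

lemma orient_comb (a b p q : ℤ × ℤ) (s t : ℝ)
    (h1 : (1 - s) * (a.1 : ℝ) + s * b.1 = (1 - t) * (p.1 : ℝ) + t * q.1)
    (h2 : (1 - s) * (a.2 : ℝ) + s * b.2 = (1 - t) * (p.2 : ℝ) + t * q.2) :
    (1 - t) * (orientZ a b p : ℝ) + t * (orientZ a b q : ℝ) = 0 := by
  rw [orient_real, orient_real]
  have e1 : (1 - t) * ((p.1 : ℝ) - a.1) + t * (q.1 - a.1) = s * (b.1 - a.1) := by linarith
  have e2 : (1 - t) * ((p.2 : ℝ) - a.2) + t * (q.2 - a.2) = s * (b.2 - a.2) := by linarith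
  linear_combination ((b.1 : ℝ) - a.1) * e2 - ((b.2 : ℝ) - a.2) * e1

lemma comb_same (a b c : ℤ × ℤ) (s t : ℝ) (h : orientZ a b c ≠ 0)
    (h1 : (1 - s) * (a.1 : ℝ) + s * b.1 = (1 - t) * (a.1 : ℝ) + t * c.1)
    (h2 : (1 - s) * (a.2 : ℝ) + s * b.2 = (1 - t) * (a.2 : ℝ) + t * c.2) : t = 0 := by
  have := orient_comb a b a c s t h1 h2
  have h0 : orientZ a b a = 0 := by simp [orientZ]
  rw [h0] at this
  have h' : (orientZ a b c : ℝ) ≠ 0 := by exact_mod_cast h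
  simpa [h'] using this

lemma no_cross (x y t : ℝ) (h0 : 0 ≤ t) (h1 : t ≤ 1) (h : 0 < x * y)
    (hc : (1 - t) * x + t * y = 0) : False := by
  rcases pos_and_pos_or_neg_and_neg_of_mul_pos h with ⟨hx, hy⟩ | ⟨hx, hy⟩
  · rcases eq_or_lt_of_le h0 with h | h
    · subst h; simp at hc; linarith
    · nlinarith [mul_pos h hy, mul_nonneg (sub_nonneg.2 h1) hx.le]
  · rcases eq_or_lt_of_le h0 with h | h
    · subst h; simp at hc; linarith
    · nlinarith [mul_pos h (neg_pos.2 hy), mul_nonneg (sub_nonneg.2 h1) (neg_pos.2 hx).le]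

noncomputable def segP (a b : ℤ × ℤ) (t : ℝ) : ℝ × ℝ :=
  ((1 - t) * (a.1 : ℝ) + t * b.1, (1 - t) * (a.2 : ℝ) + t * b.2)

lemma segP_rev (a b : ℤ × ℤ) (t : ℝ) : segP a b t = segP b a (1 - t) := by
  simp only [segP, Prod.mk.injEq]; constructor <;> ring

theorem planar_of_straight {V : Type*} (H : SimpleGraph V) (P : V → ℤ × ℤ)
    (hinj : Function.Injective P)
    (hgen : ∀ a b c : V, a ≠ b → a ≠ c → b ≠ c → orientZ (P a) (P b) (P c) ≠ 0)
    (hcr : ∀ a b c d : V, H.Adj a b → H.Adj c d → a ≠ c → a ≠ d → b ≠ c → b ≠ d →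
      0 < orientZ (P a) (P b) (P c) * orientZ (P a) (P b) (P d) ∨
      0 < orientZ (P c) (P d) (P a) * orientZ (P c) (P d) (P b)) : IsPlanar H := by
  have hout : ∀ e : H.edgeSet, ∃ uv : V × V, (e : Sym2 V) = s(uv.1, uv.2) ∧ H.Adj uv.1 uv.2 := by
    rintro ⟨e, he⟩
    induction e using Sym2.ind with
    | _ u v => exact ⟨(u, v), rfl, he⟩
  choose uv huv hadj using hout
  have hfin : ∀ a b : V, P a = P b → a = b := fun a b h => hinj h
  set f : V → ℝ × ℝ := fun v => (((P v).1 : ℝ), ((P v).2 : ℝ)) with hf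
  have finj : Function.Injective f := by
    intro a b h
    apply hinj
    simp only [hf, Prod.mk.injEq, Int.cast_inj] at h
    exact Prod.ext h.1 h.2
  have seg0 : ∀ a b : V, segP (P a) (P b) 0 = f a := by intro a b; simp [segP, hf]
  have seg1 : ∀ a b : V, segP (P a) (P b) 1 = f b := by intro a b; simp [segP, hf]
  have segne : ∀ a b : V, a ≠ b → ∀ s t : ℝ, segP (P a) (P b) s = segP (P a) (P b) t → s = t := by
    intro a b hab s t h
    simp only [segP, Prod.mk.injEq] at h
    by_contra hst
    apply hab
    apply finj
    have hst' : s - t ≠ 0 := sub_ne_zero.2 hst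
    have h1 : (s - t) * (((P b).1 : ℝ) - (P a).1) = 0 := by linear_combination h.1
    have h2 : (s - t) * (((P b).2 : ℝ) - (P a).2) = 0 := by linear_combination h.2
    simp only [mul_eq_zero, hst', false_or] at h1 h2
    simp only [hf, Prod.mk.injEq]
    constructor <;> linarith
  have share : ∀ a b c : V, a ≠ b → a ≠ c → b ≠ c → ∀ s t : ℝ,
      segP (P a) (P b) s = segP (P a) (P c) t → segP (P a) (P b) s ∈ Set.range f := by
    intro a b c hab hac hbc s t h
    have h' := h
    simp only [segP, Prod.mk.injEq] at h'
    have ht := comb_same _ _ _ s t (hgen a b c hab hac hbc) h'.1 h'.2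
    rw [h, ht, seg0]; exact ⟨a, rfl⟩
  refine ⟨f, fun e t => segP (P (uv e).1) (P (uv e).2) t, finj, ?_, ?_, ?_, ?_, ?_⟩
  · intro e; unfold segP; fun_prop
  · intro e
    exact ⟨(uv e).1, (uv e).2, huv e, seg0 _ _, seg1 _ _⟩
  · intro e s t h
    exact Subtype.ext (segne _ _ (hadj e).ne _ _ h)
  · intro e t h0 h1 v h
    beta_reduce at h
    have hne := (hadj e).ne
    by_cases hva : v = (uv e).1
    · apply h0
      apply segne _ _ hne
      rw [seg0, h, hva]
    by_cases hvb : v = (uv e).2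
    · apply h1
      apply segne _ _ hne
      rw [seg1, h, hvb]
    have h3 := h
    rw [← seg0 v v] at h3
    simp only [segP, Prod.mk.injEq] at h3
    have h4 := orient_comb _ _ _ _ _ _ h3.1 h3.2
    have h5 : (orientZ (P (uv e).1) (P (uv e).2) (P v) : ℝ) ≠ 0 := by
      exact_mod_cast hgen _ _ _ hne (Ne.symm hva) (Ne.symm hvb)
    simp [h5] at h4
  · intro e e' hee s t h
    beta_reduce at h ⊢
    have hne := (hadj e).ne
    have hne' := (hadj e').ne
    have hE : s((uv e).1, (uv e).2) ≠ s((uv e').1, (uv e').2) := by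
      rw [← huv, ← huv]; exact fun h => hee (Subtype.ext h)
    have hA := hadj e
    have hA' := hadj e'
    revert h hE hne hne' hA hA'
    generalize (uv e).1 = a
    generalize (uv e).2 = b
    generalize (uv e').1 = c
    generalize (uv e').2 = d
    intro h hab hcd hE hA hA'
    by_cases hac : a = c
    · subst hac
      have hbd : b ≠ d := by rintro rfl; exact hE rfl
      exact share a b d hab hcd hbd _ _ h
    by_cases had : a = d
    · subst had
      have hbc : b ≠ c := by rintro rfl; exact hE Sym2.eq_swap
      rw [segP_rev (P c)] at h
      exact share a b c hab hac hbc _ _ h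
    by_cases hbc : b = c
    · subst hbc
      rw [segP_rev (P a)] at h ⊢
      exact share b a d hab.symm hcd had _ _ h
    by_cases hbd : b = d
    · subst hbd
      rw [segP_rev (P a)] at h ⊢
      rw [segP_rev (P c)] at h
      exact share b a c hab.symm hcd.symm hac _ _ h
    exfalso
    simp only [segP, Prod.mk.injEq] at h
    rcases hcr a b c d hA hA' hac had hbc hbd with h1 | h1
    · exact no_cross _ _ t t.2.1 t.2.2 (by exact_mod_cast h1) (orient_comb _ _ _ _ _ _ h.1 h.2)
    · exact no_cross _ _ s s.2.1 s.2.2 (by exact_mod_cast h1)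
        (orient_comb _ _ _ _ _ _ h.1.symm h.2.symm)

/-! ### The four layers -/

def layerPos : ℕ → List (ℤ × ℤ)
  | 0 => [
    (169, 43), (97, 147), (61, 63), (138, 93), (48, 33), (85, 149), (153, 10), (102, 113),
    (201, 1), (116, 150), (139, 61), (0, 0), (119, 26), (99, 81), (98, 36), (65, 94), (100, 201),
    (97, 8), (148, 34), (80, 61), (57, 65), (116, 119), (111, 138), (55, 48), (120, 59),
    (128, 120), (121, 122), (170, 46), (55, 50)]
  | 1 => [
    (199, 53), (214, 268), (240, 177), (236, 80), (184, 143), (156, 171), (261, 157), (240, 210),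
    (273, 175), (400, 1), (226, 139), (295, 131), (212, 130), (231, 302), (200, 86), (270, 164),
    (241, 184), (1, 1), (200, 401), (291, 80), (281, 198), (195, 141), (212, 111), (281, 163),
    (333, 89), (217, 194), (185, 112), (193, 216), (273, 177)]
  | 2 => [
    (301, 9), (347, 8), (242, 116), (366, 15), (232, 63), (356, 10), (145, 170), (201, 17),
    (246, 42), (200, 401), (242, 77), (97, 66), (332, 31), (256, 60), (299, 74), (268, 79),
    (245, 70), (244, 86), (109, 32), (290, 36), (354, 14), (258, 183), (202, 141), (400, 0),
    (305, 18), (279, 50), (186, 79), (0, 1), (267, 74)]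
  | _ => [
    (528, 310), (682, 118), (270, 227), (681, 115), (329, 469), (699, 123), (402, 283),
    (670, 126), (600, 176), (652, 211), (256, 145), (610, 205), (1001, 0), (526, 74), (252, 156),
    (770, 141), (501, 1000), (635, 110), (322, 349), (697, 122), (376, 222), (565, 199),
    (622, 143), (299, 110), (383, 333), (562, 249), (782, 51), (1, 1), (725, 121)]

/-- Edges, an edge `{a, b}` with `a < b` being coded as `29 * a + b`. -/
def layerEdges : ℕ → List ℕ
  | 0 => [
    3, 8, 18, 27, 44, 45, 50, 51, 55, 73, 77, 78, 81, 86, 102, 103, 105, 108, 111, 112, 113, 114,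
    131, 133, 135, 136, 139, 144, 160, 161, 191, 192, 218, 224, 248, 249, 250, 259, 277, 283,
    286, 287, 308, 314, 334, 335, 336, 365, 366, 392, 396, 401, 424, 425, 430]
  | 1 => [
    5, 17, 19, 22, 26, 47, 49, 54, 56, 74, 83, 106, 109, 137, 138, 162, 163, 166, 167, 170, 171,
    172, 189, 190, 193, 194, 197, 199, 202, 219, 223, 228, 247, 252, 255, 260, 278, 279, 280,
    281, 285, 309, 311, 312, 315, 338, 339, 342, 343, 369, 370, 395, 397, 428, 432]
  | 2 => [
    1, 7, 23, 24, 52, 53, 75, 79, 80, 84, 107, 110, 141, 142, 165, 168, 169, 195, 196, 200, 201,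
    221, 226, 227, 229, 230, 251, 256, 257, 258, 282, 284, 288, 305, 306, 307, 316, 318, 337,
    345, 346, 367, 368, 371, 372, 373, 393, 402, 421, 422, 423, 427, 429, 431, 434]
  | _ => [
    2, 4, 6, 9, 10, 11, 12, 13, 14, 15, 16, 20, 21, 25, 28, 46, 48, 57, 76, 82, 85, 104, 115,
    132, 134, 140, 143, 164, 173, 198, 220, 222, 225, 231, 253, 254, 276, 289, 310, 313, 317,
    340, 341, 344, 347, 363, 364, 374, 375, 376, 394, 398, 399, 400, 403, 404, 405, 426, 433]

def ptOf (k i : ℕ) : ℤ × ℤ := (layerPos k).getD i (0, 0)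

def adjB (k a b : ℕ) : Bool :=
  (layerEdges k).contains (29 * a + b) || (layerEdges k).contains (29 * b + a)

def partOf (a : ℕ) : ℕ := if a = 0 then 0 else if a < 15 then 1 else 2

def allLt (n : ℕ) (p : ℕ → Bool) : Bool := (List.range n).all p

lemma allLt_spec {n : ℕ} {p : ℕ → Bool} (h : allLt n p = true) (i : ℕ) (hi : i < n) :
    p i = true := by
  simp only [allLt, List.all_eq_true, List.mem_range] at h
  exact h i hi

def checkGen (k : ℕ) : Bool :=
  allLt 29 fun c => allLt c fun b => allLt b fun a =>
    orientZ (ptOf k a) (ptOf k b) (ptOf k c) != 0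

def crossOK (k a b c d : ℕ) : Bool :=
  a == c || a == d || b == c || b == d ||
  decide (0 < orientZ (ptOf k a) (ptOf k b) (ptOf k c) * orientZ (ptOf k a) (ptOf k b) (ptOf k d))
  || decide
    (0 < orientZ (ptOf k c) (ptOf k d) (ptOf k a) * orientZ (ptOf k c) (ptOf k d) (ptOf k b))

def checkCross (k : ℕ) : Bool :=
  (layerEdges k).all fun e => (layerEdges k).all fun e' =>
    crossOK k (e / 29) (e % 29) (e' / 29) (e' % 29)

def checkCover : Bool :=
  allLt 29 fun b => allLt b fun a =>
    partOf a == partOf b || adjB 0 a b || adjB 1 a b || adjB 2 a b || adjB 3 a b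

theorem gen0 : checkGen 0 = true := by decide +kernel
theorem gen1 : checkGen 1 = true := by decide +kernel
theorem gen2 : checkGen 2 = true := by decide +kernel
theorem gen3 : checkGen 3 = true := by decide +kernel
theorem cross0 : checkCross 0 = true := by decide +kernel
theorem cross1 : checkCross 1 = true := by decide +kernel
theorem cross2 : checkCross 2 = true := by decide +kernel
theorem cross3 : checkCross 3 = true := by decide +kernel
theorem cover_ok : checkCover = true := by decide +kernel

lemma gen_all (k : ℕ) (hk : k < 4) : checkGen k = true := by
  interval_cases k
  exacts [gen0, gen1, gen2, gen3]

lemma cross_all (k : ℕ) (hk : k < 4) : checkCross k = true := by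
  interval_cases k
  exacts [cross0, cross1, cross2, cross3]

lemma orient_swap12 (p q r : ℤ × ℤ) : orientZ q p r = - orientZ p q r := by
  simp only [orientZ]; ring

lemma orient_swap23 (p q r : ℤ × ℤ) : orientZ p r q = - orientZ p q r := by
  simp only [orientZ]; ring

lemma gen_lt (k : ℕ) (hk : k < 4) (a b c : ℕ) (hab : a < b) (hbc : b < c) (hc : c < 29) :
    orientZ (ptOf k a) (ptOf k b) (ptOf k c) ≠ 0 := by
  have h := allLt_spec (allLt_spec (allLt_spec (gen_all k hk) c hc) b hbc) a hab
  simpa using h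

lemma gen_ne (k : ℕ) (hk : k < 4) (a b c : ℕ) (ha : a < 29) (hb : b < 29) (hc : c < 29)
    (hab : a ≠ b) (hac : a ≠ c) (hbc : b ≠ c) :
    orientZ (ptOf k a) (ptOf k b) (ptOf k c) ≠ 0 := by
  rcases lt_or_gt_of_ne hab with h1 | h1 <;> rcases lt_or_gt_of_ne hac with h2 | h2 <;>
    rcases lt_or_gt_of_ne hbc with h3 | h3
  · exact gen_lt k hk _ _ _ h1 h3 hc
  · rw [orient_swap23, neg_ne_zero]; exact gen_lt k hk _ _ _ h2 h3 hb
  · omega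
  · rw [orient_swap23, orient_swap12, neg_neg]; exact gen_lt k hk _ _ _ h2 h1 hb
  · rw [orient_swap12, neg_ne_zero]; exact gen_lt k hk _ _ _ h1 h2 hc
  · omega
  · rw [orient_swap12, orient_swap23, neg_neg]; exact gen_lt k hk _ _ _ h3 h2 ha
  · rw [orient_swap12, orient_swap23, orient_swap12, neg_neg, neg_ne_zero]
    exact gen_lt k hk _ _ _ h3 h1 ha

lemma adjB_cross (k : ℕ) (hk : k < 4) (a b c d : ℕ) (ha : a < 29) (hb : b < 29)
    (hc : c < 29) (hd : d < 29) (h : adjB k a b = true) (h' : adjB k c d = true)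
    (hac : a ≠ c) (had : a ≠ d) (hbc : b ≠ c) (hbd : b ≠ d) :
    0 < orientZ (ptOf k a) (ptOf k b) (ptOf k c) * orientZ (ptOf k a) (ptOf k b) (ptOf k d) ∨
    0 < orientZ (ptOf k c) (ptOf k d) (ptOf k a) * orientZ (ptOf k c) (ptOf k d) (ptOf k b) := by
  have key : ∀ a b c d : ℕ, b < 29 → d < 29 → (29 * a + b) ∈ layerEdges k →
      (29 * c + d) ∈ layerEdges k → a ≠ c → a ≠ d → b ≠ c → b ≠ d →
    0 < orientZ (ptOf k a) (ptOf k b) (ptOf k c) * orientZ (ptOf k a) (ptOf k b) (ptOf k d) ∨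
    0 < orientZ (ptOf k c) (ptOf k d) (ptOf k a) * orientZ (ptOf k c) (ptOf k d) (ptOf k b) := by
    intro a b c d hb hd h h' hac had hbc hbd
    have hx := cross_all k hk
    simp only [checkCross, List.all_eq_true] at hx
    have := hx _ h _ h'
    have e1 : (29 * a + b) / 29 = a := by omega
    have e2 : (29 * a + b) % 29 = b := by omega
    have e3 : (29 * c + d) / 29 = c := by omega
    have e4 : (29 * c + d) % 29 = d := by omega
    rw [e1, e2, e3, e4] at this
    simpa only [crossOK, Bool.or_eq_true, beq_iff_eq, decide_eq_true_eq, hac, had, hbc, hbd,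
      false_or] using this
  simp only [adjB, Bool.or_eq_true, List.contains_iff_mem] at h h'
  rcases h with h | h <;> rcases h' with h' | h'
  · exact key a b c d hb hd h h' hac had hbc hbd
  · have := key a b d c hb hc h h' had hac hbd hbc
    rw [orient_swap12 (ptOf k c), orient_swap12 (ptOf k c), neg_mul_neg] at this
    rwa [mul_comm]
  · have := key b a c d ha hd h h' hbc hbd hac had
    rw [orient_swap12 (ptOf k a), orient_swap12 (ptOf k a), neg_mul_neg] at this
    rwa [mul_comm (orientZ (ptOf k c) _ _)]
  · have := key b a d c ha hc h h' hbd hbc had hac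
    rw [orient_swap12 (ptOf k a), orient_swap12 (ptOf k a), neg_mul_neg,
      orient_swap12 (ptOf k c), orient_swap12 (ptOf k c), neg_mul_neg] at this
    rwa [mul_comm, mul_comm (orientZ (ptOf k c) _ _)]

abbrev VV := Σ i : Fin 3, (![Fin 1, Fin 14, Fin 14] : Fin 3 → Type) i

def vidx : VV → ℕ
  | ⟨0, _⟩ => 0
  | ⟨1, x⟩ => 1 + (show Fin 14 from x).val
  | ⟨2, x⟩ => 15 + (show Fin 14 from x).val

lemma vidx_lt : ∀ v : VV, vidx v < 29
  | ⟨0, _⟩ => by simp [vidx]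
  | ⟨1, x⟩ => by have := (show Fin 14 from x).2; simp only [vidx]; omega
  | ⟨2, x⟩ => by have := (show Fin 14 from x).2; simp only [vidx]; omega

lemma vidx_part : ∀ v : VV, partOf (vidx v) = v.1.val
  | ⟨0, _⟩ => by simp [vidx, partOf]
  | ⟨1, x⟩ => (by decide : ∀ x : Fin 14, partOf (1 + x.val) = 1) x
  | ⟨2, x⟩ => (by decide : ∀ x : Fin 14, partOf (15 + x.val) = 2) x

lemma vidx_inj : Function.Injective vidx := by
  intro v w h
  have h1 : v.1 = w.1 := by
    apply Fin.ext
    rw [← vidx_part, ← vidx_part, h]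
  obtain ⟨i, x⟩ := v
  obtain ⟨j, y⟩ := w
  dsimp only at h1
  subst h1
  congr 1
  fin_cases i
  · exact Subsingleton.elim (α := Fin 1) x y
  · exact (fun (x y : Fin 14) (h : 1 + x.val = 1 + y.val) => Fin.ext (by omega) :
      ∀ x y : Fin 14, 1 + x.val = 1 + y.val → x = y) x y h
  · exact (fun (x y : Fin 14) (h : 15 + x.val = 15 + y.val) => Fin.ext (by omega) :
      ∀ x y : Fin 14, 15 + x.val = 15 + y.val → x = y) x y h

def layerGraph (k : ℕ) : SimpleGraph VV where
  Adj v w := v.1 ≠ w.1 ∧ adjB k (vidx v) (vidx w) = true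
  symm := ⟨fun v w h => ⟨h.1.symm, by
    have := h.2
    simp only [adjB] at this ⊢
    rwa [Bool.or_comm]⟩⟩
  loopless := ⟨fun v h => h.1 rfl⟩

lemma layer_planar (k : ℕ) (hk : k < 4) : IsPlanar (layerGraph k) := by
  have hne : ∀ {a b : VV}, a ≠ b → vidx a ≠ vidx b := fun h h' => h (vidx_inj h')
  apply planar_of_straight (layerGraph k) (fun v => ptOf k (vidx v))
  · intro a b h
    by_contra hab
    have hab' := hne hab
    obtain ⟨c, hc, hca, hcb⟩ : ∃ c, c < 29 ∧ vidx a ≠ c ∧ vidx b ≠ c := by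
      by_contra hcon
      push Not at hcon
      have h0 := hcon 0 (by norm_num)
      have h1 := hcon 1 (by norm_num)
      have h2 := hcon 2 (by norm_num)
      omega
    apply gen_ne k hk _ _ c (vidx_lt a) (vidx_lt b) hc hab' hca hcb
    dsimp only at h
    rw [h]
    simp [orientZ]
  · intro a b c hab hac hbc
    exact gen_ne k hk _ _ _ (vidx_lt a) (vidx_lt b) (vidx_lt c) (hne hab) (hne hac) (hne hbc)
  · intro a b c d h h' hac had hbc hbd
    exact adjB_cross k hk _ _ _ _ (vidx_lt a) (vidx_lt b) (vidx_lt c) (vidx_lt d) h.2 h'.2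
      (hne hac) (hne had) (hne hbc) (hne hbd)

lemma cover_lt (a b : ℕ) (hab : a < b) (hb : b < 29) (hp : partOf a ≠ partOf b) :
    ∃ k : Fin 4, adjB k a b = true := by
  have := allLt_spec (allLt_spec cover_ok b hb) a hab
  simp only [Bool.or_eq_true, beq_iff_eq, hp, false_or] at this
  rcases this with ((h | h) | h) | h
  exacts [⟨0, h⟩, ⟨1, h⟩, ⟨2, h⟩, ⟨3, h⟩]

lemma upper_bound : ∃ H : Fin 4 → SimpleGraph VV,
    (∀ i, H i ≤ completeMultipartiteGraph ![Fin 1, Fin 14, Fin 14]) ∧ (∀ i, IsPlanar (H i)) ∧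
    (⨆ i, H i) = completeMultipartiteGraph ![Fin 1, Fin 14, Fin 14] := by
  have hle : ∀ k, layerGraph k ≤ completeMultipartiteGraph ![Fin 1, Fin 14, Fin 14] :=
    fun k v w h => h.1
  refine ⟨fun i => layerGraph i, fun i => hle i, fun i => layer_planar i i.2, ?_⟩
  apply le_antisymm
  · exact iSup_le fun i => hle i
  · intro v w h
    have hvw : v.1 ≠ w.1 := h
    have hp : partOf (vidx v) ≠ partOf (vidx w) := by
      rw [vidx_part, vidx_part]; exact fun h => hvw (Fin.ext h)
    have hne : vidx v ≠ vidx w := fun h => hp (by rw [h])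
    rw [SimpleGraph.iSup_adj]
    rcases lt_or_gt_of_ne hne with hl | hl
    · obtain ⟨k, hk⟩ := cover_lt _ _ hl (vidx_lt w) hp
      exact ⟨k, hvw, hk⟩
    · obtain ⟨k, hk⟩ := cover_lt _ _ hl (vidx_lt v) hp.symm
      exact ⟨k, SimpleGraph.Adj.symm (show (layerGraph k).Adj w v from ⟨hvw.symm, hk⟩)⟩

/-! ### Cycles in the square lattice -/

abbrev Pt := ℤ × ℤ
abbrev Ed := Pt × Bool

def eTgt (e : Ed) : Pt := if e.2 then (e.1.1 + 1, e.1.2) else (e.1.1, e.1.2 + 1)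

def eLeft (e : Ed) : Pt := if e.2 then (e.1.1, e.1.2 - 1) else (e.1.1 - 1, e.1.2)

noncomputable def bd (e : Ed) : Pt →₀ ZMod 2 :=
  Finsupp.single e.1 1 + Finsupp.single (eTgt e) 1

def dd (φ : Pt → ZMod 2) (e : Ed) : ZMod 2 := φ e.1 + φ (eLeft e)

lemma two_z (a : ZMod 2) : a + a = 0 := CharTwo.add_self_eq_zero a

lemma bd_coord (Z : Ed →₀ ZMod 2) (i j : ℤ) :
    (Finsupp.linearCombination (ZMod 2) bd Z) (i, j) =
      Z ((i, j), true) + Z ((i - 1, j), true) + Z ((i, j), false) + Z ((i, j - 1), false) := by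
  induction Z using Finsupp.induction_linear with
  | zero => simp
  | add f g hf hg => rw [map_add, Finsupp.add_apply, hf, hg]; simp only [Finsupp.add_apply]; ring
  | single e c =>
    obtain ⟨⟨a, b⟩, t⟩ := e
    have h1 : a + 1 = i ↔ a = i - 1 := by omega
    have h2 : b + 1 = j ↔ b = j - 1 := by omega
    cases t <;>
      simp [bd, eTgt, Finsupp.single_apply, h1, h2]

lemma exact_lattice (Z : Ed →₀ ZMod 2) (hZ : Finsupp.linearCombination (ZMod 2) bd Z = 0) :
    ∃ φ : Pt → ZMod 2, ∀ e, dd φ e = Z e := by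
  obtain ⟨M, hM⟩ : ∃ M : ℤ, ∀ e : Ed, e.1.2 < M → Z e = 0 := by
    obtain ⟨M, hM⟩ := (Z.support.image (fun e : Ed => e.1.2)).bddBelow
    refine ⟨M, fun e he => ?_⟩
    by_contra h
    have : M ≤ e.1.2 := hM (by
      simp only [Finset.coe_image, Set.mem_image, Finset.mem_coe, Finsupp.mem_support_iff]
      exact ⟨e, h, rfl⟩)
    omega
  have hc : ∀ i j : ℤ, Z ((i, j), true) + Z ((i - 1, j), true) + Z ((i, j), false)
      + Z ((i, j - 1), false) = 0 := by
    intro i j; rw [← bd_coord, hZ]; rfl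
  let φ : Pt → ZMod 2 := fun p => ∑ k ∈ Finset.Ico M (p.2 + 1), Z ((p.1, k), true)
  have hstep : ∀ i j : ℤ, φ (i, j) = φ (i, j - 1) + Z ((i, j), true) := by
    intro i j
    simp only [φ, sub_add_cancel]
    by_cases h : j < M
    · rw [hM _ (by exact h), Finset.Ico_eq_empty (by omega), Finset.Ico_eq_empty (by omega)]; simp
    · have : Finset.Ico M (j + 1) = insert j (Finset.Ico M j) := by
        ext k; simp only [Finset.mem_Ico, Finset.mem_insert]; omega
      rw [this, Finset.sum_insert (by simp), add_comm]
  have hlow : ∀ i j : ℤ, j < M → φ (i, j) = 0 := by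
    intro i j h
    simp only [φ]
    rw [Finset.Ico_eq_empty (by omega)]; simp
  have hv : ∀ i : ℤ, ∀ n : ℕ, φ (i, M - 1 + n) + φ (i - 1, M - 1 + n)
      = Z ((i, M - 1 + n), false) := by
    intro i n
    induction n with
    | zero => rw [hlow, hlow, hM] <;> simp
    | succ n ih =>
      rw [hstep i, hstep (i - 1)]
      have e1 : M - 1 + ((n + 1 : ℕ) : ℤ) - 1 = M - 1 + n := by push_cast; ring
      have := hc i (M - 1 + ((n + 1 : ℕ) : ℤ))
      rw [e1] at this ⊢
      rw [← ih] at this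
      have h2 := two_z (Z ((i, M - 1 + ((n + 1 : ℕ) : ℤ)), false))
      linear_combination this - h2
  refine ⟨φ, ?_⟩
  rintro ⟨⟨i, j⟩, t⟩
  cases t
  · simp only [dd, eLeft, Bool.false_eq_true, if_false]
    by_cases h : j < M
    · rw [hlow _ _ h, hlow _ _ h, hM _ (by exact h)]; simp
    · obtain ⟨n, hn⟩ : ∃ n : ℕ, j = M - 1 + n := ⟨(j - (M - 1)).toNat, by omega⟩
      rw [hn]; exact hv i n
  · simp only [dd, eLeft, if_true]
    rw [hstep i j]
    have h2 := two_z (φ (i, j - 1))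
    linear_combination h2

lemma exact_fin {I : Type*} [Fintype I] (j : I → Ed) (hj : Function.Injective j)
    (z : I → ZMod 2) (hz : ∑ i, z i • bd (j i) = 0) :
    ∃ φ : Pt → ZMod 2, (∀ i, dd φ (j i) = z i) ∧ ∀ e, e ∉ Set.range j → dd φ e = 0 := by
  classical
  let Z : Ed →₀ ZMod 2 := ∑ i, Finsupp.single (j i) (z i)
  have hZ : Finsupp.linearCombination (ZMod 2) bd Z = 0 := by
    simp only [Z, map_sum, Finsupp.linearCombination_single, hz]
  obtain ⟨φ, hφ⟩ := exact_lattice Z hZ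
  refine ⟨φ, fun i => ?_, fun e he => ?_⟩
  · rw [hφ]
    simp only [Z, Finsupp.finsetSum_apply, Finsupp.single_apply, hj.eq_iff]
    simp
  · rw [hφ]
    simp only [Z, Finsupp.finsetSum_apply, Finsupp.single_apply]
    apply Finset.sum_eq_zero
    intro i _
    rw [if_neg]
    rintro rfl
    exact he ⟨i, rfl⟩

lemma closed_fin {I : Type*} [Fintype I] (j : I → Ed) (hj : Function.Injective j)
    (φ : Pt → ZMod 2) (h0 : ∀ e, e ∉ Set.range j → dd φ e = 0) :
    ∑ i, dd φ (j i) • bd (j i) = 0 := by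
  classical
  let Z : Ed →₀ ZMod 2 := ∑ i, Finsupp.single (j i) (dd φ (j i))
  have hZ : ∑ i, dd φ (j i) • bd (j i) = Finsupp.linearCombination (ZMod 2) bd Z := by
    simp only [Z, map_sum, Finsupp.linearCombination_single]
  have hval : ∀ e, Z e = dd φ e := by
    intro e
    simp only [Z, Finsupp.finsetSum_apply, Finsupp.single_apply]
    by_cases he : e ∈ Set.range j
    · obtain ⟨i, rfl⟩ := he
      simp [hj.eq_iff]
    · rw [h0 e he]
      apply Finset.sum_eq_zero
      intro i _
      rw [if_neg]
      rintro rfl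
      exact he ⟨i, rfl⟩
  rw [hZ]
  ext ⟨a, b⟩
  rw [bd_coord]
  simp only [hval, dd, eLeft, Finsupp.zero_apply, if_true, Bool.false_eq_true, if_false]
  have h1 := two_z (φ (a, b))
  have h2 := two_z (φ (a, b - 1))
  have h3 := two_z (φ (a - 1, b))
  have h4 := two_z (φ (a - 1, b - 1))
  linear_combination h1 + h2 + h3 + h4

lemma dd_const (φ : Pt → ZMod 2) (h : ∀ e, dd φ e = 0) (p q : Pt) : φ p = φ q := by
  have hE : ∀ e, φ e.1 = φ (eLeft e) := fun e => by
    have := h e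
    exact CharTwo.add_eq_zero.1 this
  have h1 : ∀ a b : ℤ, φ (a, b) = φ (a, b - 1) := fun a b => by
    simpa [eLeft] using hE ((a, b), true)
  have h2 : ∀ a b : ℤ, φ (a, b) = φ (a - 1, b) := fun a b => by
    simpa [eLeft] using hE ((a, b), false)
  have h3 : ∀ a b : ℤ, φ (a, b) = φ (a, 0) := fun a b => by
    induction b using Int.induction_on with
    | zero => rfl
    | succ n ih => rw [h1, ← ih]; congr 2; ring
    | pred n ih => rw [← ih, h1 a (-(n : ℤ))]
  have h4 : ∀ a : ℤ, φ (a, 0) = φ (0, 0) := fun a => by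
    induction a using Int.induction_on with
    | zero => rfl
    | succ n ih => rw [h2, ← ih]; congr 2; ring
    | pred n ih => rw [← ih, h2 (-(n : ℤ))]
  obtain ⟨a, b⟩ := p
  obtain ⟨c, d⟩ := q
  rw [h3, h4, h3 c d, h4 c]

/-! ### Euler bound for bipartite minors of the lattice -/

section minor
set_option linter.unusedSectionVars false
variable {X Y : Type} [Fintype X] [Fintype Y] [DecidableEq X] [DecidableEq Y]

noncomputable def gB (e : X × Y) : (X ⊕ Y) →₀ ZMod 2 :=
  Finsupp.single (Sum.inl e.1) 1 + Finsupp.single (Sum.inr e.2) 1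

noncomputable def bdG (E : Finset (X × Y)) : (E → ZMod 2) →ₗ[ZMod 2] ((X ⊕ Y) →₀ ZMod 2) :=
  Fintype.linearCombination (ZMod 2) (fun e : E => gB e.1)

lemma bdG_apply (E : Finset (X × Y)) (w : E → ZMod 2) : bdG E w = ∑ e, w e • gB e.1 := rfl

lemma even_row (E : Finset (X × Y)) (w : E → ZMod 2) (h : bdG E w = 0) (e : E) (he : w e ≠ 0) :
    ∃ e' : E, e' ≠ e ∧ e'.1.1 = e.1.1 ∧ w e' ≠ 0 := by
  by_contra hcon
  push Not at hcon
  apply he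
  have h1 := DFunLike.congr_fun h (Sum.inl e.1.1)
  rw [bdG_apply, Finsupp.finsetSum_apply, Finset.sum_eq_single e] at h1
  · simpa [gB] using h1
  · intro e' _ hne
    by_cases hx : e'.1.1 = e.1.1
    · rw [hcon e' hne hx]; simp
    · simp [gB, hx]
  · simp

lemma even_col (E : Finset (X × Y)) (w : E → ZMod 2) (h : bdG E w = 0) (e : E) (he : w e ≠ 0) :
    ∃ e' : E, e' ≠ e ∧ e'.1.2 = e.1.2 ∧ w e' ≠ 0 := by
  by_contra hcon
  push Not at hcon
  apply he
  have h1 := DFunLike.congr_fun h (Sum.inr e.1.2)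
  rw [bdG_apply, Finsupp.finsetSum_apply, Finset.sum_eq_single e] at h1
  · simpa [gB] using h1
  · intro e' _ hne
    by_cases hx : e'.1.2 = e.1.2
    · rw [hcon e' hne hx]; simp
    · simp [gB, hx]
  · simp

lemma four_le (E : Finset (X × Y)) (w : E → ZMod 2) (h : bdG E w = 0) (hw : w ≠ 0) :
    4 ≤ (Finset.univ.filter fun e => w e ≠ 0).card := by
  obtain ⟨e, he⟩ := Function.ne_iff.1 hw
  have he : w e ≠ 0 := he
  obtain ⟨r, hr, hr1, hr2⟩ := even_row E w h e he
  obtain ⟨c, hc, hc1, hc2⟩ := even_col E w h e he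
  obtain ⟨s, hs, hs1, hs2⟩ := even_row E w h c hc2
  have hce : c.1.1 ≠ e.1.1 := fun h => hc (Subtype.ext (Prod.ext h hc1))
  have hsub : ({e, r, c, s} : Finset E) ⊆ Finset.univ.filter fun e => w e ≠ 0 := by
    intro a ha
    simp only [Finset.mem_insert, Finset.mem_singleton] at ha
    rcases ha with rfl | rfl | rfl | rfl <;> simp [*]
  refine le_trans (le_of_eq ?_) (Finset.card_le_card hsub)
  have hcr : r ≠ c := by rintro rfl; exact hce hr1
  have hse : e ≠ s := by rintro rfl; exact hce hs1.symm
  have hsr : r ≠ s := by rintro rfl; exact hce (hs1.symm.trans hr1)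
  rw [Finset.card_insert_of_notMem, Finset.card_insert_of_notMem, Finset.card_insert_of_notMem,
    Finset.card_singleton]
  · simpa using hs.symm
  · simpa using ⟨hcr, hsr⟩
  · simpa using ⟨hr.symm, hc.symm, hse⟩

theorem minor_bound (E : Finset (X × Y)) (col : Pt → Option (X ⊕ Y))
    (hfin : {p | col p ≠ none}.Finite)
    (conn : ∀ c p q, col p = some c → col q = some c →
      (Finsupp.single p 1 + Finsupp.single q 1 : Pt →₀ ZMod 2) ∈ Submodule.span (ZMod 2)
        (bd '' {e | col e.1 = col (eTgt e) ∧ col e.1 ≠ none}))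
    (ε : X × Y → Ed)
    (hε : ∀ a ∈ E, (col (ε a).1 = some (Sum.inl a.1) ∧ col (eTgt (ε a)) = some (Sum.inr a.2)) ∨
      (col (ε a).1 = some (Sum.inr a.2) ∧ col (eTgt (ε a)) = some (Sum.inl a.1))) :
    E.card ≤ 2 * (Fintype.card X + Fintype.card Y) ∨
      E.card ≤ Fintype.card X + Fintype.card Y + 1 := by
  classical
  set G1 : Set Ed := {e | col e.1 = col (eTgt e) ∧ col e.1 ≠ none} with hG1
  have hG1fin : G1.Finite := by
    refine ((hfin.prod (Set.finite_univ (α := Bool)))).subset ?_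
    rintro ⟨p, t⟩ h
    exact ⟨h.2, trivial⟩
  obtain ⟨κ, a, ainj, aspan, aind⟩ :=
    exists_linearIndependent' (ZMod 2) (fun e : G1 => bd e.1)
  have : Finite G1 := hG1fin
  have : Finite κ := Finite.of_injective a ainj
  have : Fintype κ := Fintype.ofFinite κ
  let j : κ ⊕ E → Ed := Sum.elim (fun k => (a k).1) (fun e => ε e.1)
  have hcolne : ∀ e : E, ε e.1 ∉ G1 := by
    intro e he
    rcases hε e.1 e.2 with h | h <;> · have := he.1; rw [h.1, h.2] at this; simp at this
  have jinj : Function.Injective j := by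
    rintro (k | e) (k' | e') h
    · exact congrArg _ (ainj (Subtype.ext h))
    · have h : (a k).1 = ε e'.1 := h
      exact absurd (h ▸ (a k).2 : ε e'.1 ∈ G1) (hcolne e')
    · have h : ε e.1 = (a k').1 := h
      exact absurd (h ▸ (a k').2 : ε e.1 ∈ G1) (hcolne e)
    · congr 1
      have h : ε e.1 = ε e'.1 := h
      apply Subtype.ext
      rcases hε e.1 e.2 with h1 | h1 <;> rcases hε e'.1 e'.2 with h2 | h2 <;>
        · rw [h] at h1
          have h3 := h1.1.symm.trans h2.1
          have h4 := h1.2.symm.trans h2.2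
          simp only [Option.some.injEq, Sum.inl.injEq, Sum.inr.injEq, reduceCtorEq] at h3 h4
          try exact Prod.ext (by simp [*]) (by simp [*])
  let r : Pt → Pt → Prop := fun p q => ∃ e, e ∉ Set.range j ∧ p = e.1 ∧ q = eLeft e
  let Q := Quot r
  let T : (Q → ZMod 2) →ₗ[ZMod 2] (E → ZMod 2) :=
    { toFun := fun φ e => dd (fun p => φ (Quot.mk r p)) (ε e.1)
      map_add' := by intro φ ψ; ext e; simp only [dd, Pi.add_apply]; ring
      map_smul' := by intro c φ; ext e; simp only [dd, Pi.smul_apply, smul_eq_mul,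
                        RingHom.id_apply]; ring }
  have hoff : ∀ φ : Q → ZMod 2, ∀ e, e ∉ Set.range j → dd (fun p => φ (Quot.mk r p)) e = 0 := by
    intro φ e he
    have : Quot.mk r e.1 = Quot.mk r (eLeft e) := Quot.sound ⟨e, he, rfl, rfl⟩
    simp only [dd, this, two_z]
  -- every cycle of the bipartite graph is in the range of T
  have hsurj : LinearMap.ker (bdG E) ≤ LinearMap.range T := by
    intro w hw
    have hw : bdG E w = 0 := hw
    obtain ⟨rep, hrep⟩ : ∃ rep : X ⊕ Y → Pt, ∀ c p, col p = some c → col (rep c) = some c := by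
      have : ∀ c, ∃ q, ∀ p, col p = some c → col q = some c := by
        intro c
        by_cases h : ∃ p, col p = some c
        · obtain ⟨p, hp⟩ := h; exact ⟨p, fun _ _ => hp⟩
        · exact ⟨(0, 0), fun p hp => absurd ⟨p, hp⟩ h⟩
      choose rep hrep using this
      exact ⟨rep, hrep⟩
    have hS : ∑ e : E, w e • bd (ε e.1) ∈ Submodule.span (ZMod 2) (bd '' G1) := by
      have h1 : ∑ e : E, w e • bd (ε e.1) =
          ∑ e : E, w e • (bd (ε e.1) + Finsupp.mapDomain rep (gB e.1)) := by
        have h2 : ∑ e : E, w e • Finsupp.mapDomain rep (gB e.1) = 0 := by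
          have := congrArg (Finsupp.lmapDomain (ZMod 2) (ZMod 2) rep) hw
          rw [bdG_apply, map_sum, map_zero] at this
          simpa using this
        simp only [smul_add, Finset.sum_add_distrib, h2, add_zero]
      rw [h1]
      refine Submodule.sum_mem _ fun e _ => Submodule.smul_mem _ _ ?_
      have h3 : Finsupp.mapDomain rep (gB e.1) = (Finsupp.single (rep (Sum.inl e.1.1)) 1 +
          Finsupp.single (rep (Sum.inr e.1.2)) 1 : Pt →₀ ZMod 2) := by
        simp [gB, Finsupp.mapDomain_add, Finsupp.mapDomain_single]
      rw [h3, bd]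
      rcases hε e.1 e.2 with h | h
      · have := Submodule.add_mem _ (conn _ _ _ h.1 (hrep _ _ h.1)) (conn _ _ _ h.2 (hrep _ _ h.2))
        convert this using 1; abel
      · have := Submodule.add_mem _ (conn _ _ _ h.1 (hrep _ _ h.1)) (conn _ _ _ h.2 (hrep _ _ h.2))
        convert this using 1; abel
    have hrange : Set.range (fun e : G1 => bd e.1) = bd '' G1 := by
      ext y; simp
    rw [← hrange, ← aspan, Submodule.mem_span_range_iff_exists_fun] at hS
    obtain ⟨c, hc⟩ := hS
    have hz : ∑ i, (Sum.elim c w : κ ⊕ E → ZMod 2) i • bd (j i) = 0 := by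
      rw [Fintype.sum_sum_type]
      simp only [Sum.elim_inl, Sum.elim_inr, j]
      simp only [Function.comp] at hc
      rw [hc]
      ext p
      exact two_z _
    obtain ⟨φ, h1, h2⟩ := exact_fin j jinj _ hz
    have hresp : ∀ p q, r p q → φ p = φ q := by
      rintro p q ⟨e, he, rfl, rfl⟩
      exact CharTwo.add_eq_zero.1 (h2 e he)
    refine ⟨Quot.lift φ hresp, ?_⟩
    ext e
    exact h1 (Sum.inr e)
  -- range of T consists of cycles
  let π : (Pt →₀ ZMod 2) →ₗ[ZMod 2] ((X ⊕ Y) →₀ ZMod 2) :=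
    Finsupp.linearCombination (ZMod 2) (fun p => (col p).elim 0 (fun c => Finsupp.single c 1))
  have hπ1 : ∀ e ∈ G1, π (bd e) = 0 := by
    intro e he
    simp only [π, bd, map_add, Finsupp.linearCombination_single, one_smul, he.1]
    ext p; exact two_z _
  have hπ2 : ∀ e : E, π (bd (ε e.1)) = gB e.1 := by
    intro e
    simp only [π, bd, map_add, Finsupp.linearCombination_single, one_smul, gB]
    rcases hε e.1 e.2 with h | h
    · rw [h.1, h.2]; rfl
    · rw [h.1, h.2, add_comm]; rfl
  have hT : ∀ φ, bdG E (T φ) = 0 := by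
    intro φ
    have h1 := congrArg π (closed_fin j jinj _ (hoff φ))
    rw [map_sum, Fintype.sum_sum_type, map_zero] at h1
    simp only [map_smul, j, Sum.elim_inl, Sum.elim_inr, hπ2] at h1
    rw [Finset.sum_eq_zero, zero_add] at h1
    · rw [bdG_apply]; exact h1
    · intro k _
      rw [hπ1 _ (a k).2, smul_zero]
  have hT0 : ∀ φ, T φ = 0 → ∀ q q', φ q = φ q' := by
    intro φ h
    have h1 := closed_fin j jinj _ (hoff φ)
    rw [Fintype.sum_sum_type] at h1
    have h2 : ∀ e : E, dd (fun p => φ (Quot.mk r p)) (ε e.1) = 0 := fun e => congrFun h e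
    simp only [j, Sum.elim_inl, Sum.elim_inr, h2, zero_smul, Finset.sum_const_zero,
      add_zero] at h1
    have h3 := Fintype.linearIndependent_iff.1 aind _ h1
    have h4 : ∀ e, dd (fun p => φ (Quot.mk r p)) e = 0 := by
      intro e
      by_cases he : e ∈ Set.range j
      · obtain ⟨k | e, rfl⟩ := he
        · exact h3 k
        · exact h2 e
      · exact hoff φ e he
    intro q q'
    induction q using Quot.ind
    induction q' using Quot.ind
    exact dd_const _ h4 _ _
  -- rank
  have hker : E.card ≤ Fintype.card X + Fintype.card Y +
      Module.finrank (ZMod 2) (LinearMap.ker (bdG E)) := by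
    have h1 := LinearMap.finrank_range_add_finrank_ker (bdG E)
    have h2 := Submodule.finrank_le (LinearMap.range (bdG E))
    rw [Module.finrank_finsupp_self, Fintype.card_sum] at h2
    rw [Module.finrank_fintype_fun_eq_card, Fintype.card_coe] at h1
    omega
  have hQ : ∀ [Fintype Q], E.card ≤ Fintype.card X + Fintype.card Y + Fintype.card Q := by
    intro _
    have h1 := Submodule.finrank_mono hsurj
    have h2 := LinearMap.finrank_range_le T
    rw [Module.finrank_fintype_fun_eq_card] at h2
    omega
  by_cases hsub : Subsingleton Q
  · right
    have : Fintype Q := Fintype.ofSubsingleton (Quot.mk r (0, 0))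
    have h1 := Fintype.card_le_one_iff_subsingleton.2 hsub
    have := hQ
    omega
  · left
    have hbound : ∀ s : Finset Q, 4 * s.card ≤ 2 * E.card := by
      intro s
      let R : Q → E → Prop := fun q e => T (Pi.single q 1) e ≠ 0
      have h1 : ∀ q ∈ s, 4 ≤ (Finset.bipartiteAbove R Finset.univ q).card := by
        intro q _
        apply four_le E _ (hT _)
        intro h0
        apply hsub
        have h2 := hT0 _ h0
        have h3 : ∀ q', q' = q := by
          intro q'
          by_contra hne
          have := h2 q q'
          simp [hne] at this
        exact ⟨fun x y => (h3 x).trans (h3 y).symm⟩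
      have h2 : ∀ e ∈ (Finset.univ : Finset E), (Finset.bipartiteBelow R s e).card ≤ 2 := by
        intro e _
        refine le_trans (Finset.card_le_card (t := {Quot.mk r (ε e.1).1,
          Quot.mk r (eLeft (ε e.1))}) ?_) Finset.card_le_two
        intro q hq
        rw [Finset.mem_bipartiteBelow] at hq
        by_contra hne
        simp only [Finset.mem_insert, Finset.mem_singleton, not_or] at hne
        apply hq.2
        change (Pi.single q 1 : Q → ZMod 2) (Quot.mk r (ε e.1).1) +
          (Pi.single q 1 : Q → ZMod 2) (Quot.mk r (eLeft (ε e.1))) = 0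
        rw [Pi.single_eq_of_ne (Ne.symm hne.1), Pi.single_eq_of_ne (Ne.symm hne.2), add_zero]
      have h3 := Finset.card_mul_le_card_mul R h1 h2
      simp only [Finset.card_univ, Fintype.card_coe] at h3
      omega
    have hfinQ : Finite Q := by
      by_contra hinf
      rw [not_finite_iff_infinite] at hinf
      obtain ⟨s, hs⟩ := Infinite.exists_subset_card_eq Q (E.card + 1)
      have := hbound s
      omega
    have : Fintype Q := Fintype.ofFinite Q
    have h1 := hbound Finset.univ
    rw [Finset.card_univ] at h1
    have := hQ
    omega

end minor

/-! ### From drawings to lattice minors -/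

section draw
open Relation

def LAdj (m m' : Pt) : Prop := ∃ e : Ed, (m = e.1 ∧ m' = eTgt e) ∨ (m = eTgt e ∧ m' = e.1)

lemma LAdj.symm {m m' : Pt} (h : LAdj m m') : LAdj m' m := by
  obtain ⟨e, h | h⟩ := h
  · exact ⟨e, Or.inr ⟨h.2, h.1⟩⟩
  · exact ⟨e, Or.inl ⟨h.2, h.1⟩⟩

def Nb (S : Set Pt) (m m' : Pt) : Prop := LAdj m m' ∧ m ∈ S ∧ m' ∈ S

abbrev Lk (S : Set Pt) : Pt → Pt → Prop := ReflTransGen (Nb S)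

lemma Lk.symm {S : Set Pt} {m m' : Pt} (h : Lk S m m') : Lk S m' m := by
  induction h with
  | refl => exact ReflTransGen.refl
  | tail _ h ih => exact ReflTransGen.head ⟨h.1.symm, h.2.2, h.2.1⟩ ih

lemma Lk.mono {S T : Set Pt} (hST : S ⊆ T) {m m' : Pt} (h : Lk S m m') : Lk T m m' := by
  induction h with
  | refl => exact ReflTransGen.refl
  | tail _ h ih => exact ReflTransGen.tail ih ⟨h.1, hST h.2.1, hST h.2.2⟩

lemma Lk.trans {S : Set Pt} {a b c : Pt} (h : Lk S a b) (h' : Lk S b c) : Lk S a c :=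
  ReflTransGen.trans h h'

lemma Lk.exit {S R : Set Pt} {a b : Pt} (h : Lk S a b) (ha : a ∈ R) (hb : b ∉ R) :
    ∃ c d, c ∈ R ∧ d ∉ R ∧ Nb S c d := by
  induction h with
  | refl => exact absurd ha hb
  | @tail c d _ h ih =>
    by_cases hc : c ∈ R
    · exact ⟨c, d, hc, hb, h⟩
    · exact ih hc

lemma minor_bound_sets {X Y : Type} [Fintype X] [Fintype Y] [DecidableEq X] [DecidableEq Y]
    (E : Finset (X × Y)) (D : X ⊕ Y → Set Pt)
    (hdisj : ∀ c c' m, m ∈ D c → m ∈ D c' → c = c') (hfin : ∀ c, (D c).Finite)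
    (hconn : ∀ c m m', m ∈ D c → m' ∈ D c → Lk (D c) m m')
    (hedge : ∀ a ∈ E, ∃ m ∈ D (Sum.inl a.1), ∃ m' ∈ D (Sum.inr a.2), LAdj m m') :
    E.card ≤ 2 * (Fintype.card X + Fintype.card Y) ∨
      E.card ≤ Fintype.card X + Fintype.card Y + 1 := by
  classical
  let col : Pt → Option (X ⊕ Y) := fun m => if h : ∃ c, m ∈ D c then some h.choose else none
  have hcol : ∀ m c, col m = some c ↔ m ∈ D c := by
    intro m c
    simp only [col]
    split_ifs with h
    · constructor
      · intro h'
        rw [Option.some.injEq] at h'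
        rw [← h']; exact h.choose_spec
      · intro h'
        rw [hdisj _ _ _ h.choose_spec h']
    · constructor
      · intro h'; exact absurd h' (by simp)
      · intro h'; exact absurd ⟨c, h'⟩ h
  have hE : ∀ a : X × Y, ∃ e : Ed, a ∈ E →
      (col e.1 = some (Sum.inl a.1) ∧ col (eTgt e) = some (Sum.inr a.2)) ∨
      (col e.1 = some (Sum.inr a.2) ∧ col (eTgt e) = some (Sum.inl a.1)) := by
    intro a
    by_cases ha : a ∈ E
    · obtain ⟨m, hm, m', hm', e, he⟩ := hedge a ha
      refine ⟨e, fun _ => ?_⟩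
      rcases he with ⟨rfl, rfl⟩ | ⟨rfl, rfl⟩
      · exact Or.inl ⟨(hcol _ _).2 hm, (hcol _ _).2 hm'⟩
      · exact Or.inr ⟨(hcol _ _).2 hm', (hcol _ _).2 hm⟩
    · exact ⟨((0, 0), true), fun h => absurd h ha⟩
  choose ε hε using hE
  apply minor_bound E col _ _ ε hε
  · refine (Set.finite_iUnion hfin).subset ?_
    intro m hm
    obtain ⟨c, hc⟩ := Option.ne_none_iff_exists'.1 hm
    exact Set.mem_iUnion.2 ⟨c, (hcol _ _).1 hc⟩
  · intro c p q hp hq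
    have h := hconn c p q ((hcol _ _).1 hp) ((hcol _ _).1 hq)
    clear hq
    induction h with
    | refl =>
      have : (Finsupp.single p 1 + Finsupp.single p 1 : Pt →₀ ZMod 2) = 0 := by
        ext x; exact two_z _
      rw [this]; exact Submodule.zero_mem _
    | @tail b d _ h ih =>
      have h1 : (Finsupp.single b 1 + Finsupp.single d 1 : Pt →₀ ZMod 2) ∈ Submodule.span (ZMod 2)
          (bd '' {e | col e.1 = col (eTgt e) ∧ col e.1 ≠ none}) := by
        obtain ⟨⟨e, he⟩, hb, hd⟩ := h
        rw [← hcol] at hb hd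
        apply Submodule.subset_span
        refine ⟨e, ?_, ?_⟩
        · rcases he with ⟨rfl, rfl⟩ | ⟨rfl, rfl⟩
          · exact ⟨hb.trans hd.symm, by rw [hb]; simp⟩
          · exact ⟨hd.trans hb.symm, by rw [hd]; simp⟩
        · rcases he with ⟨rfl, rfl⟩ | ⟨rfl, rfl⟩
          · rfl
          · rw [bd, add_comm]
      have h2 := Submodule.add_mem _ ih h1
      convert h2 using 1
      have h3 : (Finsupp.single b 1 + Finsupp.single b 1 : Pt →₀ ZMod 2) = 0 := by
        ext x; exact two_z _
      calc (Finsupp.single p 1 + Finsupp.single d 1 : Pt →₀ ZMod 2)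
          = Finsupp.single p 1 + (Finsupp.single b 1 + Finsupp.single b 1)
            + Finsupp.single d 1 := by rw [h3, add_zero]
        _ = _ := by abel

/-- Lattice points close to `s`. -/
def NN (η : ℝ) (s : ℝ × ℝ) : Set Pt := {m | |η * m.1 - s.1| < η ∧ |η * m.2 - s.2| < η}

def cells (η : ℝ) (S : Set (ℝ × ℝ)) : Set Pt := {m | ∃ s ∈ S, m ∈ NN η s}

lemma NN_nonempty {η : ℝ} (hη : 0 < η) (s : ℝ × ℝ) : (NN η s).Nonempty := by
  have key : ∀ x : ℝ, |η * (⌊x / η⌋ : ℝ) - x| < η := by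
    intro x
    have h1 := Int.floor_le (x / η)
    have h2 := Int.lt_floor_add_one (x / η)
    rw [le_div_iff₀ hη] at h1
    rw [div_lt_iff₀ hη] at h2
    rw [abs_lt]; constructor <;> nlinarith
  exact ⟨(⌊s.1 / η⌋, ⌊s.2 / η⌋), key _, key _⟩

lemma near_int {η x : ℝ} (hη : 0 < η) {a b : ℤ} (ha : |η * a - x| < η) (hb : |η * b - x| < η) :
    a = b ∨ a = b + 1 ∨ b = a + 1 := by
  rw [abs_lt] at ha hb
  have h1 : (a : ℝ) - b < 2 := by
    by_contra h; push Not at h; nlinarith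
  have h2 : (b : ℝ) - a < 2 := by
    by_contra h; push Not at h; nlinarith
  have h1' : a - b < 2 := by exact_mod_cast h1
  have h2' : b - a < 2 := by exact_mod_cast h2
  omega

lemma NN_conn {η : ℝ} (hη : 0 < η) (s : ℝ × ℝ) {m m' : Pt} (h : m ∈ NN η s) (h' : m' ∈ NN η s) :
    Lk (NN η s) m m' := by
  obtain ⟨a, b⟩ := m
  obtain ⟨c, d⟩ := m'
  have hmid : ((c, b) : Pt) ∈ NN η s := ⟨h'.1, h.2⟩
  have h1 : Lk (NN η s) (a, b) (c, b) := by
    rcases near_int hη h.1 h'.1 with e | e | e <;> dsimp only at e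
    · rw [e]
    · exact ReflTransGen.single ⟨⟨((c, b), true), Or.inr ⟨by simp [eTgt, e], rfl⟩⟩, h, hmid⟩
    · exact ReflTransGen.single ⟨⟨((a, b), true), Or.inl ⟨rfl, by simp [eTgt, e]⟩⟩, h, hmid⟩
  have h2 : Lk (NN η s) (c, b) (c, d) := by
    rcases near_int hη h.2 h'.2 with e | e | e <;> dsimp only at e
    · rw [e]
    · exact ReflTransGen.single ⟨⟨((c, d), false), Or.inr ⟨by simp [eTgt, e], rfl⟩⟩, hmid, h'⟩
    · exact ReflTransGen.single ⟨⟨((c, b), false), Or.inl ⟨rfl, by simp [eTgt, e]⟩⟩, hmid, h'⟩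
  exact h1.trans h2

lemma NN_sub_cells {η : ℝ} {S : Set (ℝ × ℝ)} {s : ℝ × ℝ} (hs : s ∈ S) : NN η s ⊆ cells η S :=
  fun _ hm => ⟨s, hs, hm⟩

lemma cells_conn {η : ℝ} (hη : 0 < η) {S : Set (ℝ × ℝ)} (hS : IsPreconnected S) {m m' : Pt}
    (h : m ∈ cells η S) (h' : m' ∈ cells η S) : Lk (cells η S) m m' := by
  obtain ⟨s, hs, hm⟩ := h
  obtain ⟨s', hs', hm'⟩ := h'
  let P : ℝ × ℝ → ℝ × ℝ → Prop := fun s s' => ∀ m ∈ NN η s, ∀ m' ∈ NN η s', Lk (cells η S) m m'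
  suffices hP : P s s' from hP m hm m' hm'
  refine hS.induction₂' P ?_ ?_ hs hs'
  · intro x hx
    obtain ⟨n, hn⟩ := NN_nonempty hη x
    have hopen : ∀ᶠ y in nhds x, n ∈ NN η y := by
      have h1 : IsOpen {y : ℝ × ℝ | n ∈ NN η y} := by
        have : {y : ℝ × ℝ | n ∈ NN η y} =
          {y : ℝ × ℝ | |η * n.1 - y.1| < η} ∩ {y : ℝ × ℝ | |η * n.2 - y.2| < η} := rfl
        rw [this]
        apply IsOpen.inter
        · exact isOpen_lt (by fun_prop) (by fun_prop)
        · exact isOpen_lt (by fun_prop) (by fun_prop)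
      exact h1.mem_nhds hn
    filter_upwards [nhdsWithin_le_nhds hopen, self_mem_nhdsWithin] with y hy hyS
    constructor
    · intro a ha b hb
      exact ((NN_conn hη x ha hn).mono (NN_sub_cells hx)).trans
        ((NN_conn hη y hy hb).mono (NN_sub_cells hyS))
    · intro a ha b hb
      exact ((NN_conn hη y ha hy).mono (NN_sub_cells hyS)).trans
        ((NN_conn hη x hn hb).mono (NN_sub_cells hx))
  · intro x y z _ _ _ hxy hyz a ha b hb
    obtain ⟨n, hn⟩ := NN_nonempty hη y
    exact (hxy a ha n hn).trans (hyz n hn b hb)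

lemma cells_finite {η : ℝ} (hη : 0 < η) {S : Set (ℝ × ℝ)} (hS : IsCompact S) :
    (cells η S).Finite := by
  obtain ⟨r, hr⟩ := hS.isBounded.subset_closedBall 0
  have key : ∀ (a : ℤ) (x : ℝ), |x| ≤ r → |η * a - x| < η →
      a ∈ Set.Icc (-(⌈r / η⌉ + 1)) (⌈r / η⌉ + 1) := by
    intro a x hx ha
    have h1 : r ≤ η * ⌈r / η⌉ := by
      have := Int.le_ceil (r / η)
      rw [div_le_iff₀ hη] at this; linarith
    rw [abs_le] at hx
    rw [abs_lt] at ha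
    constructor
    · have : (-((⌈r / η⌉ : ℝ) + 1)) ≤ a := by
        by_contra h; push Not at h; nlinarith
      exact_mod_cast this
    · have : (a : ℝ) ≤ (⌈r / η⌉ : ℝ) + 1 := by
        by_contra h; push Not at h; nlinarith
      exact_mod_cast this
  refine ((Set.finite_Icc (-(⌈r / η⌉ + 1)) (⌈r / η⌉ + 1)).prod
    (Set.finite_Icc (-(⌈r / η⌉ + 1)) (⌈r / η⌉ + 1))).subset ?_
  rintro m ⟨s, hs, h1, h2⟩
  have h3 := hr hs
  rw [mem_closedBall_zero_iff, Prod.norm_def, max_le_iff, Real.norm_eq_abs, Real.norm_eq_abs] at h3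
  exact ⟨key _ _ h3.1 h1, key _ _ h3.2 h2⟩

lemma cells_disj {η : ℝ} {K L : Set (ℝ × ℝ)} (h : ∀ a ∈ K, ∀ b ∈ L, 2 * η ≤ dist a b)
    {m : Pt} (hK : m ∈ cells η K) (hL : m ∈ cells η L) : False := by
  obtain ⟨a, ha, h1⟩ := hK
  obtain ⟨b, hb, h2⟩ := hL
  have := h a ha b hb
  have h3 : dist a b < 2 * η := by
    rw [Prod.dist_eq, max_lt_iff, Real.dist_eq, Real.dist_eq]
    obtain ⟨u1, u2⟩ := h1
    obtain ⟨v1, v2⟩ := h2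
    rw [abs_lt] at u1 u2 v1 v2
    constructor <;> rw [abs_lt] <;> constructor <;> linarith
  linarith

lemma compact_sep {K L : Set (ℝ × ℝ)} (hK : IsCompact K) (hL : IsCompact L) (h : Disjoint K L) :
    ∃ δ > 0, ∀ a ∈ K, ∀ b ∈ L, δ ≤ dist a b := by
  obtain ⟨δ, hδ, hd⟩ := h.exists_thickenings hK hL.isClosed
  refine ⟨δ, hδ, fun a ha b hb => ?_⟩
  by_contra hlt
  push Not at hlt
  have h1 := Set.disjoint_left.1 hd (Metric.self_subset_thickening hδ K ha)
  exact h1 (Metric.mem_thickening_iff.2 ⟨b, hb, hlt⟩)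

lemma fin_sep {ι : Type*} [Finite ι] (K : ι → Set (ℝ × ℝ)) (hK : ∀ i, IsCompact (K i)) :
    ∃ η > 0, ∀ i j, Disjoint (K i) (K j) → ∀ a ∈ K i, ∀ b ∈ K j, 2 * η ≤ dist a b := by
  have h : ∀ ij : ι × ι, ∃ δ > 0, Disjoint (K ij.1) (K ij.2) →
      ∀ a ∈ K ij.1, ∀ b ∈ K ij.2, δ ≤ dist a b := by
    rintro ⟨i, j⟩
    by_cases hd : Disjoint (K i) (K j)
    · obtain ⟨δ, h1, h2⟩ := compact_sep (hK i) (hK j) hd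
      exact ⟨δ, h1, fun _ => h2⟩
    · exact ⟨1, one_pos, fun h => absurd h hd⟩
  choose δ hδ h using h
  have hev : ∀ᶠ η in nhdsWithin (0 : ℝ) (Set.Ioi 0), ∀ ij : ι × ι, η < δ ij / 2 := by
    rw [Filter.eventually_all]
    intro ij
    exact nhdsWithin_le_nhds (Iio_mem_nhds (by have := hδ ij; linarith))
  obtain ⟨η, h1, h2⟩ := (hev.and self_mem_nhdsWithin).exists
  refine ⟨η, h2, fun i j hd a ha b hb => ?_⟩
  have := h (i, j) hd a ha b hb
  have := h1 (i, j)
  linarith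

theorem draw_bound {X Y : Type} [Fintype X] [Fintype Y] [DecidableEq X] [DecidableEq Y]
    (E : Finset (X × Y)) (A B : E → Set (ℝ × ℝ)) (p : X → ℝ × ℝ) (q : Y → ℝ × ℝ)
    (hAc : ∀ e, IsCompact (A e)) (hBc : ∀ e, IsCompact (B e))
    (hAp : ∀ e, IsPreconnected (A e)) (hBp : ∀ e, IsPreconnected (B e))
    (hpA : ∀ e, p e.1.1 ∈ A e) (hqB : ∀ e, q e.1.2 ∈ B e) (hAB : ∀ e, (A e ∩ B e).Nonempty)
    (D1 : ∀ e e' : E, e.1.1 ≠ e'.1.1 → Disjoint (A e) (A e'))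
    (D2 : ∀ e e' : E, e.1.2 ≠ e'.1.2 → Disjoint (B e) (B e'))
    (D3 : ∀ e e' : E, e.1.2 ≠ e'.1.2 → Disjoint (A e) (B e'))
    (D4 : ∀ x e, p x ∉ B e) :
    E.card ≤ 2 * (Fintype.card X + Fintype.card Y) ∨
      E.card ≤ Fintype.card X + Fintype.card Y + 1 := by
  classical
  let K : (E ⊕ E) ⊕ X → Set (ℝ × ℝ) := Sum.elim (Sum.elim A B) (fun x => {p x})
  have hK : ∀ i, IsCompact (K i) := by
    rintro ((e | e) | x)
    · exact hAc e
    · exact hBc e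
    · exact isCompact_singleton
  obtain ⟨η, hη, hsep⟩ := fin_sep K hK
  have S1 : ∀ (e e' : E) m, e.1.1 ≠ e'.1.1 → m ∈ cells η (A e) → m ∉ cells η (A e') :=
    fun e e' m h h1 h2 => cells_disj (hsep (Sum.inl (Sum.inl e)) (Sum.inl (Sum.inl e'))
      (D1 e e' h)) h1 h2
  have S2 : ∀ (e e' : E) m, e.1.2 ≠ e'.1.2 → m ∈ cells η (B e) → m ∉ cells η (B e') :=
    fun e e' m h h1 h2 => cells_disj (hsep (Sum.inl (Sum.inr e)) (Sum.inl (Sum.inr e'))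
      (D2 e e' h)) h1 h2
  have S3 : ∀ (e e' : E) m, e.1.2 ≠ e'.1.2 → m ∈ cells η (A e) → m ∉ cells η (B e') :=
    fun e e' m h h1 h2 => cells_disj (hsep (Sum.inl (Sum.inl e)) (Sum.inl (Sum.inr e'))
      (D3 e e' h)) h1 h2
  have S4 : ∀ x (e : E) m, m ∈ NN η (p x) → m ∉ cells η (B e) :=
    fun x e m h1 h2 => cells_disj (hsep (Sum.inr x) (Sum.inl (Sum.inr e))
      (Set.disjoint_singleton_left.2 (D4 x e))) ⟨p x, rfl, h1⟩ h2
  choose m0 hm0 using fun x => NN_nonempty hη (p x)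
  choose n0 hn0 using fun y => NN_nonempty hη (q y)
  let BB : Y → Set Pt := fun y => {m | ∃ e : E, e.1.2 = y ∧ m ∈ cells η (B e)}
  let R : E → Set Pt := fun e => {m | Lk (cells η (A e) \ BB e.1.2) (m0 e.1.1) m}
  let CC : X → Set Pt := fun x => {m | ∃ e : E, e.1.1 = x ∧ m ∈ R e}
  have hm0S : ∀ e : E, m0 e.1.1 ∈ cells η (A e) \ BB e.1.2 := by
    intro e
    refine ⟨⟨_, hpA e, hm0 _⟩, ?_⟩
    rintro ⟨e', _, h⟩
    exact S4 _ _ _ (hm0 _) h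
  have hRS : ∀ e m, m ∈ R e → m ∈ cells η (A e) \ BB e.1.2 := by
    intro e m hm
    rcases ReflTransGen.cases_tail hm with h | ⟨c, _, h⟩
    · rw [h]; exact hm0S e
    · exact h.2.2
  have hRR : ∀ e m, m ∈ R e → Lk (R e) (m0 e.1.1) m := by
    intro e m hm
    have hm' : Lk (cells η (A e) \ BB e.1.2) (m0 e.1.1) m := hm
    clear hm
    induction hm' with
    | refl => exact ReflTransGen.refl
    | @tail b c hb h ih => exact ReflTransGen.tail ih ⟨h.1, hb, ReflTransGen.tail hb h⟩
  apply minor_bound_sets E (Sum.elim CC BB)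
  · rintro (x | y) (x' | y') m h h'
    · obtain ⟨e, rfl, h⟩ := h
      obtain ⟨e', rfl, h'⟩ := h'
      by_contra hne
      exact S1 e e' m (fun h => hne (by rw [h])) (hRS _ _ h).1 (hRS _ _ h').1
    · exfalso
      obtain ⟨e, rfl, h⟩ := h
      obtain ⟨e', rfl, h'⟩ := h'
      by_cases hy : e.1.2 = e'.1.2
      · exact (hRS _ _ h).2 ⟨e', hy.symm, h'⟩
      · exact S3 e e' m hy (hRS _ _ h).1 h'
    · exfalso
      obtain ⟨e, rfl, h1⟩ := h'
      obtain ⟨e', rfl, h2⟩ := h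
      by_cases hy : e.1.2 = e'.1.2
      · exact (hRS _ _ h1).2 ⟨e', hy.symm, h2⟩
      · exact S3 e e' m hy (hRS _ _ h1).1 h2
    · obtain ⟨e, rfl, h⟩ := h
      obtain ⟨e', rfl, h'⟩ := h'
      by_contra hne
      exact S2 e e' m (fun h => hne (by rw [h])) h h'
  · rintro (x | y)
    · refine (Set.finite_iUnion fun e : E => cells_finite hη (hAc e)).subset ?_
      rintro m ⟨e, _, h⟩
      exact Set.mem_iUnion.2 ⟨e, (hRS _ _ h).1⟩
    · refine (Set.finite_iUnion fun e : E => cells_finite hη (hBc e)).subset ?_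
      rintro m ⟨e, _, h⟩
      exact Set.mem_iUnion.2 ⟨e, h⟩
  · rintro (x | y) m m' h h'
    · have key : ∀ m ∈ CC x, Lk (CC x) (m0 x) m := by
        rintro k ⟨e, he, hk⟩
        subst he
        exact Lk.mono (S := R e) (T := CC e.1.1) (fun a ha => ⟨e, rfl, ha⟩) (hRR e k hk)
      exact (key m h).symm.trans (key m' h')
    · have key : ∀ m ∈ BB y, Lk (BB y) (n0 y) m := by
        rintro k ⟨e, he, hk⟩
        subst he
        exact Lk.mono (S := cells η (B e)) (T := BB e.1.2) (fun a ha => ⟨e, rfl, ha⟩)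
          (cells_conn hη (hBp e) (NN_sub_cells (hqB e) (hn0 _)) hk)
      exact (key m h).symm.trans (key m' h')
  · intro a ha
    let e : E := ⟨a, ha⟩
    obtain ⟨s, hsA, hsB⟩ := hAB e
    obtain ⟨m1, hm1⟩ := NN_nonempty hη s
    have h1 : m1 ∈ BB e.1.2 := ⟨e, rfl, s, hsB, hm1⟩
    have hlk : Lk (cells η (A e)) (m0 e.1.1) m1 :=
      cells_conn hη (hAp e) (hm0S e).1 ⟨s, hsA, hm1⟩
    obtain ⟨c, d, hc, hd, hcd⟩ := hlk.exit (R := R e) ReflTransGen.refl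
      (fun h => (hRS _ _ h).2 h1)
    refine ⟨c, ⟨e, rfl, hc⟩, d, ?_, hcd.1⟩
    by_contra hdB
    exact hd (ReflTransGen.tail hc ⟨hcd.1, hRS _ _ hc, hcd.2.2, hdB⟩)

end draw

/-! ### The bound for a planar layer -/

section layer

lemma arc_or {V : Type*} {f : V → ℝ × ℝ}
    {γ : Set.Icc (0:ℝ) 1 → ℝ × ℝ} (hc : Continuous γ) {u v x y : V}
    (huv : s(x, y) = s(u, v)) (h0 : γ ⟨0, by norm_num⟩ = f u) (h1 : γ ⟨1, by norm_num⟩ = f v)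
    (hint : ∀ t : Set.Icc (0:ℝ) 1, (t : ℝ) ≠ 0 → (t : ℝ) ≠ 1 → ∀ v : V, γ t ≠ f v)
    (hf : Function.Injective f) :
    ∃ A B : Set (ℝ × ℝ), IsCompact A ∧ IsCompact B ∧ IsPreconnected A ∧ IsPreconnected B ∧
      f x ∈ A ∧ f y ∈ B ∧ (A ∩ B).Nonempty ∧ A ⊆ Set.range γ ∧ B ⊆ Set.range γ ∧
      (∀ w, f w ∈ A → w = x) ∧ (∀ w, f w ∈ B → w = y) := by
  let g : ℝ → ℝ × ℝ := fun t => γ (Set.projIcc 0 1 zero_le_one t)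
  have hg : Continuous g := hc.comp continuous_projIcc
  have g0 : g 0 = f u := by
    rw [← h0]; simp only [g]; rw [Set.projIcc_left]
  have g1 : g 1 = f v := by
    rw [← h1]; simp only [g]; rw [Set.projIcc_right]
  have gi : ∀ t, 0 < t → t < 1 → ∀ w, g t ≠ f w := by
    intro t ht0 ht1 w
    simp only [g]
    rw [Set.projIcc_of_mem zero_le_one ⟨ht0.le, ht1.le⟩]
    exact hint _ ht0.ne' ht1.ne w
  have hr : ∀ S, g '' S ⊆ Set.range γ := by
    rintro S _ ⟨t, _, rfl⟩; exact ⟨_, rfl⟩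
  let P := g '' Set.Icc 0 (1/2)
  let Q := g '' Set.Icc (1/2) 1
  have cP : IsCompact P := isCompact_Icc.image hg
  have cQ : IsCompact Q := isCompact_Icc.image hg
  have pP : IsPreconnected P := isPreconnected_Icc.image _ hg.continuousOn
  have pQ : IsPreconnected Q := isPreconnected_Icc.image _ hg.continuousOn
  have uP : f u ∈ P := ⟨0, by norm_num, g0⟩
  have vQ : f v ∈ Q := ⟨1, by norm_num, g1⟩
  have hPQ : g (1/2) ∈ P ∩ Q := ⟨⟨1/2, by norm_num, rfl⟩, ⟨1/2, by norm_num, rfl⟩⟩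
  have wP : ∀ w, f w ∈ P → w = u := by
    rintro w ⟨t, ht, h⟩
    rcases ht.1.eq_or_lt with h' | h'
    · rw [← h', g0] at h; exact (hf h).symm
    · exact absurd h (gi t h' (by linarith [ht.2]) w)
  have wQ : ∀ w, f w ∈ Q → w = v := by
    rintro w ⟨t, ht, h⟩
    rcases ht.2.eq_or_lt with h' | h'
    · rw [h', g1] at h; exact (hf h).symm
    · exact absurd h (gi t (by linarith [ht.1]) h' w)
  rcases Sym2.eq_iff.1 huv with ⟨rfl, rfl⟩ | ⟨rfl, rfl⟩
  · exact ⟨P, Q, cP, cQ, pP, pQ, uP, vQ, ⟨_, hPQ⟩, hr _, hr _, wP, wQ⟩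
  · exact ⟨Q, P, cQ, cP, pQ, pP, vQ, uP, ⟨_, hPQ.2, hPQ.1⟩, hr _, hr _, wQ, wP⟩

def vx (x : Fin 14) : VV := ⟨1, x⟩
def vy (y : Fin 14) : VV := ⟨2, y⟩

lemma vx_ne_vy (x y : Fin 14) : vx x ≠ vy y := by
  intro h
  have := congrArg Sigma.fst h
  simp [vx, vy] at this

lemma vx_inj {x y : Fin 14} (h : vx x = vx y) : x = y := by
  exact eq_of_heq (Sigma.mk.inj h).2

lemma vy_inj {x y : Fin 14} (h : vy x = vy y) : x = y := by
  exact eq_of_heq (Sigma.mk.inj h).2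

open Classical in
lemma layer_bound (H : SimpleGraph VV) (hH : IsPlanar H) :
    (Finset.univ.filter fun a : Fin 14 × Fin 14 => H.Adj (vx a.1) (vy a.2)).card ≤ 56 := by
  obtain ⟨f, γ, hf, hc, hends, -, hint, hcross⟩ := hH
  set E := Finset.univ.filter fun a : Fin 14 × Fin 14 => H.Adj (vx a.1) (vy a.2) with hE
  let ed : E → H.edgeSet := fun e => ⟨s(vx e.1.1, vy e.1.2), (Finset.mem_filter.1 e.2).2⟩
  have hed : ∀ e e', ed e = ed e' → e.1.1 = e'.1.1 ∧ e.1.2 = e'.1.2 := by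
    intro e e' h
    have h' := congrArg Subtype.val h
    rcases Sym2.eq_iff.1 h' with ⟨h1, h2⟩ | ⟨h1, _⟩
    · exact ⟨vx_inj h1, vy_inj h2⟩
    · exact absurd h1 (vx_ne_vy _ _)
  have hAB : ∀ e : E, ∃ A B : Set (ℝ × ℝ), IsCompact A ∧ IsCompact B ∧ IsPreconnected A ∧
      IsPreconnected B ∧ f (vx e.1.1) ∈ A ∧ f (vy e.1.2) ∈ B ∧ (A ∩ B).Nonempty ∧
      A ⊆ Set.range (γ (ed e)) ∧ B ⊆ Set.range (γ (ed e)) ∧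
      (∀ w, f w ∈ A → w = vx e.1.1) ∧ (∀ w, f w ∈ B → w = vy e.1.2) := by
    intro e
    obtain ⟨u, v, h, h0, h1⟩ := hends (ed e)
    exact arc_or (hc (ed e)) h h0 h1 (hint (ed e)) hf
  choose A B cA cB pA pB xA yB AB rA rB wA wB using hAB
  have cross : ∀ e e', ed e ≠ ed e' → ∀ z, z ∈ Set.range (γ (ed e)) →
      z ∈ Set.range (γ (ed e')) → ∃ w, f w = z := by
    rintro e e' hne z ⟨s, rfl⟩ ⟨t, ht⟩
    exact hcross _ _ hne s t ht.symm
  have := draw_bound E A B (fun x => f (vx x)) (fun y => f (vy y)) cA cB pA pB xA yB AB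
    (by
      intro e e' hne
      rw [Set.disjoint_left]
      intro z h1 h2
      obtain ⟨w, rfl⟩ := cross e e' (fun h => hne (hed _ _ h).1) z (rA e h1) (rA e' h2)
      exact hne (vx_inj ((wA e w h1).symm.trans (wA e' w h2))))
    (by
      intro e e' hne
      rw [Set.disjoint_left]
      intro z h1 h2
      obtain ⟨w, rfl⟩ := cross e e' (fun h => hne (hed _ _ h).2) z (rB e h1) (rB e' h2)
      exact hne (vy_inj ((wB e w h1).symm.trans (wB e' w h2))))
    (by
      intro e e' hne
      rw [Set.disjoint_left]
      intro z h1 h2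
      obtain ⟨w, rfl⟩ := cross e e' (fun h => hne (hed _ _ h).2) z (rA e h1) (rB e' h2)
      exact vx_ne_vy _ _ ((wA e w h1).symm.trans (wB e' w h2)))
    (fun x e h => vx_ne_vy _ _ (wB e _ h))
  simp only [Fintype.card_fin] at this
  omega

end layer

theorem thickness_K1_14_14 :
    thickness (completeMultipartiteGraph ![Fin 1, Fin 14, Fin 14]) = 4 := by
  classical
  apply le_antisymm
  · exact Nat.sInf_le upper_bound
  · apply le_csInf ⟨4, upper_bound⟩
    rintro n ⟨H, -, hP, hsup⟩
    have hcov : ∀ a : Fin 14 × Fin 14, ∃ i, (H i).Adj (vx a.1) (vy a.2) := by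
      intro a
      have h : (completeMultipartiteGraph (![Fin 1, Fin 14, Fin 14] : Fin 3 → Type)).Adj
          (vx a.1) (vy a.2) := by
        change (1 : Fin 3) ≠ 2
        decide
      rw [← hsup, SimpleGraph.iSup_adj] at h
      exact h
    have h1 : (Finset.univ : Finset (Fin 14 × Fin 14)) ⊆ Finset.univ.biUnion fun i : Fin n =>
        Finset.univ.filter fun a : Fin 14 × Fin 14 => (H i).Adj (vx a.1) (vy a.2) := by
      intro a _
      obtain ⟨i, hi⟩ := hcov a
      exact Finset.mem_biUnion.2 ⟨i, Finset.mem_univ _, Finset.mem_filter.2 ⟨Finset.mem_univ _, hi⟩⟩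
    have h2 := Finset.card_le_card h1
    have h3 := Finset.card_biUnion_le_card_mul (Finset.univ : Finset (Fin n)) (fun i : Fin n =>
        Finset.univ.filter fun a : Fin 14 × Fin 14 => (H i).Adj (vx a.1) (vy a.2)) 56
        (fun i _ => by convert layer_bound (H i) (hP i))
    have h4 : (Finset.univ : Finset (Fin 14 × Fin 14)).card = 196 := by simp
    rw [Finset.card_univ, Fintype.card_fin] at h3
    rw [h4] at h2
    omega
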